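/- arXiv:2307.04069 — 2 statements merged into one kernel-verified Lean document; each statement's English description precedes it below -/
import Mathlib

section
/- If every row of A ∈ ℝ^{m×n} belongs to the monotone cone ℝⁿ_≥ := {x ∈ ℝⁿ : x₁ ≥ x₂ ≥ … ≥ xₙ}, then for every b ∈ ℝᵐ the set S_λ(A,b) is a convex subset of S^{n×n}. -/
open Matrix

/-- The vector of eigenvalues of a real symmetric matrix, in descending order
(junk value `0` if the matrix is not symmetric). -/
noncomputable def eigs {n : ℕ} (X : Matrix (Fin n) (Fin n) ℝ) : Fin n → ℝ :=
  if hX : X.IsHermitian then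
    fun i => (hX.eigenvalues ∘ Tuple.sort hX.eigenvalues) i.rev
  else fun _ => 0

/-- The eigenvalue constraint set `S_λ(A,b) = {X ∈ S^{n×n} : A λ(X) ≤ b}`. -/
def SLambda {m n : ℕ} (A : Matrix (Fin m) (Fin n) ℝ) (b : Fin m → ℝ) :
    Set (Matrix (Fin n) (Fin n) ℝ) :=
  {X | X.IsHermitian ∧ ∀ i, A.mulVec (eigs X) i ≤ b i}

/-!
For `c` non-increasing, `c ⬝ᵥ λ(X)` is the maximum of the linear functionals
`X ↦ ∑ i, c i * (Uᵀ X U) i i` over orthogonal `U`, hence a convex function of `X`, and `S_λ(A, b)`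
is an intersection of sublevel sets of such functions. The maximum is attained at an orthonormal
eigenbasis. It is an upper bound because the diagonal of `Uᵀ X U` is the image of `λ(X)` under the
doubly stochastic matrix of squared entries of an orthogonal matrix: by Birkhoff's theorem this is
an average of permutations of `λ(X)`, and the rearrangement inequality applies to each of them.
-/

theorem dotProduct_mulVec_le_of_mem_doublyStochastic {n R : Type*} [Fintype n] [DecidableEq n]
    [Field R] [LinearOrder R] [IsStrictOrderedRing R] {M : Matrix n n R}
    (hM : M ∈ doublyStochastic R n) {c d : n → R} (hcd : Monovary c d) : c ⬝ᵥ M *ᵥ d ≤ c ⬝ᵥ d := by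
  have hlinear : IsLinearMap R fun N : Matrix n n R => c ⬝ᵥ N *ᵥ d :=
    ⟨fun N N' => by rw [add_mulVec, dotProduct_add],
      fun r N => by rw [smul_mulVec, dotProduct_smul]⟩
  have hperm : {N | ∃ σ : Equiv.Perm n, σ.permMatrix R = N} ⊆ {N | c ⬝ᵥ N *ᵥ d ≤ c ⬝ᵥ d} := by
    rintro _ ⟨σ, rfl⟩
    rw [Set.mem_ofPred_eq, permMatrix_mulVec]
    exact hcd.sum_mul_comp_perm_le_sum_mul
  have hhull : M ∈ convexHull R {N | ∃ σ : Equiv.Perm n, σ.permMatrix R = N} := by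
    rwa [← doublyStochastic_eq_convexHull_permMatrix]
  exact convexHull_min hperm (convex_halfSpace_le hlinear _) hhull

section Unitary

variable {𝕜 : Type*} [RCLike 𝕜] {m n : Type*} [Fintype n] [DecidableEq n]

theorem submatrix_mem_unitaryGroup {R : Type*} [CommRing R] [StarRing R] [Fintype m]
    [DecidableEq m] {U : Matrix n n R} (hU : U ∈ unitaryGroup n R) (e f : m ≃ n) :
    U.submatrix e f ∈ unitaryGroup m R := by
  rw [mem_unitaryGroup_iff, star_eq_conjTranspose, conjTranspose_submatrix, submatrix_mul_equiv,
    ← star_eq_conjTranspose, mem_unitaryGroup_iff.mp hU, submatrix_one_equiv]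

theorem map_norm_sq_mem_doublyStochastic {U : Matrix n n 𝕜} (hU : U ∈ unitaryGroup n 𝕜) :
    U.map (‖·‖ ^ 2) ∈ doublyStochastic ℝ n := by
  refine mem_doublyStochastic_iff_sum.mpr ⟨fun i j => sq_nonneg _, fun i => ?_, fun j => ?_⟩
  · have hrow : (U * star U) i i = 1 := by rw [mem_unitaryGroup_iff.mp hU, one_apply_eq]
    simp only [mul_apply, star_apply, RCLike.star_def, RCLike.mul_conj] at hrow
    exact_mod_cast hrow
  · have hcol : (star U * U) j j = 1 := by rw [mem_unitaryGroup_iff'.mp hU, one_apply_eq]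
    simp only [mul_apply, star_apply, RCLike.star_def, RCLike.conj_mul] at hcol
    exact_mod_cast hcol

theorem diag_mul_diagonal_mul_conjTranspose (V : Matrix m n 𝕜) (d : n → ℝ) :
    diag (V * diagonal (RCLike.ofReal ∘ d : n → 𝕜) * Vᴴ) =
      RCLike.ofReal ∘ (V.map (‖·‖ ^ 2) *ᵥ d) := by
  ext i
  simp only [diag_apply, mul_apply (N := Vᴴ), mul_diagonal, conjTranspose_apply, RCLike.star_def,
    Function.comp_apply, mulVec, dotProduct, map_apply, map_sum, map_mul, map_pow,
    mul_right_comm _ _ (starRingEnd 𝕜 _), RCLike.mul_conj]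

theorem dotProduct_re_diag_conj_diagonal_le {V : Matrix n n 𝕜} (hV : V ∈ unitaryGroup n 𝕜)
    {c d : n → ℝ} (hcd : Monovary c d) :
    c ⬝ᵥ (RCLike.re ∘ diag (V * diagonal (RCLike.ofReal ∘ d) * Vᴴ)) ≤ c ⬝ᵥ d := by
  have hdiag : RCLike.re ∘ diag (V * diagonal (RCLike.ofReal ∘ d) * Vᴴ) =
      V.map (‖·‖ ^ 2) *ᵥ d := by
    rw [diag_mul_diagonal_mul_conjTranspose]
    exact funext fun i => RCLike.ofReal_re _
  rw [hdiag]
  exact dotProduct_mulVec_le_of_mem_doublyStochastic (map_norm_sq_mem_doublyStochastic hV) hcd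

theorem exists_unitary_eq_conj_diagonal_eigenvalues_comp_perm {X : Matrix n n 𝕜}
    (hX : X.IsHermitian) (σ : Equiv.Perm n) :
    ∃ V ∈ unitaryGroup n 𝕜, X = V * diagonal (RCLike.ofReal ∘ hX.eigenvalues ∘ σ) * Vᴴ := by
  let W : Matrix n n 𝕜 := hX.eigenvectorUnitary
  refine ⟨W.submatrix (Equiv.refl n) σ, submatrix_mem_unitaryGroup hX.eigenvectorUnitary.2 _ _, ?_⟩
  calc X = W * diagonal (RCLike.ofReal ∘ hX.eigenvalues) * Wᴴ := hX.spectral_theorem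
    _ = _ := by
      rw [← Function.comp_assoc, ← submatrix_diagonal_equiv, conjTranspose_submatrix,
        submatrix_mul_equiv, submatrix_mul_equiv, Equiv.coe_refl, submatrix_id_id]

end Unitary

theorem convex_setOf_isHermitian {n R : Type*} [AddCommGroup R] [StarAddMonoid R] [Module ℝ R]
    [StarModule ℝ R] : Convex ℝ {X : Matrix n n R | X.IsHermitian} :=
  (selfAdjoint.submodule ℝ (Matrix n n R)).convex

section SortedEigenvalues

variable {n : ℕ} {X : Matrix (Fin n) (Fin n) ℝ}

theorem eigs_antitone (X : Matrix (Fin n) (Fin n) ℝ) : Antitone (eigs X) := by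
  unfold eigs
  split_ifs with hX
  · exact (Tuple.monotone_sort hX.eigenvalues).comp_antitone Fin.rev_anti
  · exact antitone_const

theorem eigs_eq_eigenvalues_comp_perm (hX : X.IsHermitian) :
    eigs X = hX.eigenvalues ∘ Fin.revPerm.trans (Tuple.sort hX.eigenvalues) :=
  dif_pos hX

theorem exists_orthogonal_eq_conj_diagonal_eigs (hX : X.IsHermitian) :
    ∃ V ∈ orthogonalGroup (Fin n) ℝ, X = V * diagonal (eigs X) * Vᴴ := by
  rw [eigs_eq_eigenvalues_comp_perm hX]
  exact exists_unitary_eq_conj_diagonal_eigenvalues_comp_perm hX _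

theorem exists_orthogonal_diag_conj_eq_eigs (hX : X.IsHermitian) :
    ∃ U ∈ orthogonalGroup (Fin n) ℝ, diag (Uᴴ * X * U) = eigs X := by
  obtain ⟨V, hV, hXV⟩ := exists_orthogonal_eq_conj_diagonal_eigs hX
  have hVV : Vᴴ * V = 1 := mem_unitaryGroup_iff'.mp hV
  refine ⟨V, hV, ?_⟩
  calc diag (Vᴴ * X * V) = diag ((Vᴴ * V) * diagonal (eigs X) * (Vᴴ * V)) := by
        conv_lhs => rw [hXV]
        simp only [Matrix.mul_assoc]
    _ = eigs X := by rw [hVV, Matrix.one_mul, Matrix.mul_one, diag_diagonal]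

theorem dotProduct_diag_conj_le_dotProduct_eigs (hX : X.IsHermitian)
    {U : Matrix (Fin n) (Fin n) ℝ} (hU : U ∈ orthogonalGroup (Fin n) ℝ) {c : Fin n → ℝ}
    (hc : Antitone c) : c ⬝ᵥ diag (Uᴴ * X * U) ≤ c ⬝ᵥ eigs X := by
  obtain ⟨V, hV, hXV⟩ := exists_orthogonal_eq_conj_diagonal_eigs hX
  have hconj : Uᴴ * X * U = (Uᴴ * V) * diagonal (eigs X) * (Uᴴ * V)ᴴ := by
    conv_lhs => rw [hXV]
    simp only [conjTranspose_mul, conjTranspose_conjTranspose, Matrix.mul_assoc]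
  rw [hconj]
  exact dotProduct_re_diag_conj_diagonal_le (mul_mem (Unitary.star_mem hU) hV)
    (hc.monovary (eigs_antitone X))

theorem convexOn_dotProduct_eigs {c : Fin n → ℝ} (hc : Antitone c) :
    ConvexOn ℝ {X : Matrix (Fin n) (Fin n) ℝ | X.IsHermitian} fun X => c ⬝ᵥ eigs X := by
  refine ⟨convex_setOf_isHermitian, fun X hX Y hY s t hs ht hst => ?_⟩
  obtain ⟨U, hU, hdiag⟩ :=
    exists_orthogonal_diag_conj_eq_eigs (convex_setOf_isHermitian hX hY hs ht hst)
  calc c ⬝ᵥ eigs (s • X + t • Y) = c ⬝ᵥ diag (Uᴴ * (s • X + t • Y) * U) := by rw [hdiag]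
    _ = s • (c ⬝ᵥ diag (Uᴴ * X * U)) + t • (c ⬝ᵥ diag (Uᴴ * Y * U)) := by
        simp only [Matrix.mul_add, Matrix.add_mul, Matrix.mul_smul, Matrix.smul_mul, diag_add,
          diag_smul, dotProduct_add, dotProduct_smul]
    _ ≤ s • (c ⬝ᵥ eigs X) + t • (c ⬝ᵥ eigs Y) := by
        gcongr
        · exact dotProduct_diag_conj_le_dotProduct_eigs hX hU hc
        · exact dotProduct_diag_conj_le_dotProduct_eigs hY hU hc

end SortedEigenvalues

/-- If each row of `A` is non-increasing (belongs to the monotone cone `ℝⁿ_≥`),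
then `S_λ(A,b)` is convex. -/
theorem statement2 {m n : ℕ} (A : Matrix (Fin m) (Fin n) ℝ) (b : Fin m → ℝ)
    (hA : ∀ i : Fin m, ∀ j k : Fin n, j ≤ k → A i k ≤ A i j) :
    Convex ℝ (SLambda A b) := by
  have hrow (i : Fin m) : Convex ℝ {X | X.IsHermitian ∧ A i ⬝ᵥ eigs X ≤ b i} :=
    (convexOn_dotProduct_eigs (hA i)).convex_le (b i)
  rintro X ⟨hX, hXb⟩ Y ⟨hY, hYb⟩ s t hs ht hst
  exact ⟨convex_setOf_isHermitian hX hY hs ht hst,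
    fun i => (hrow i ⟨hX, hXb i⟩ ⟨hY, hYb i⟩ hs ht hst).2⟩
end

section
/- Assume F : S^{n×n} → ℝ is Lipschitz continuous with constant L > 0 with respect to the Frobenius norm, the interior of S_λ(A,b) is nonempty, and the n×(m+n−1) matrix [Aᵀ | Dₙᵀ] has full rank n. Let X* be a global minimizer of F over S_λ(A,b). Then there exists ε₀ > 0 such that for every ε ∈ [0,ε₀] the set S^ε := {X ∈ S^{n×n} : A λ(X) ≤ b and λ_{i+1}(X) ≤ λᵢ(X) − ε for i = 1,…,n−1} is nonempty, and for every global minimizer X*_ε of F over S^ε one has |F(X*) − F(X*_ε)| ≤ L · χ([Aᵀ|Dₙᵀ]) · √(n−1) · ε, where for a full-rank matrix Z ∈ ℝ^{n×(m+n−1)}, χ(Z) := max{ ‖Z_I^{-1}‖₂ : I ⊆ [m+n−1], |I| = n, Z_I nonsingular }, with Z_I the n×n submatrix of Z formed from the columns indexed by I and ‖·‖₂ the spectral norm. -/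
open Matrix

/-- The Frobenius norm of a real matrix. -/
noncomputable def frobNorm {k l : Type*} [Fintype k] [Fintype l]
    (M : Matrix k l ℝ) : ℝ :=
  Real.sqrt (∑ i, ∑ j, (M i j) ^ 2)

/-- The spectral norm (ℓ₂ operator norm) of a real matrix. -/
noncomputable def specNorm {k l : Type*} [Fintype k] [Fintype l]
    (M : Matrix k l ℝ) : ℝ :=
  sSup {r | ∃ x : l → ℝ, Real.sqrt (∑ j, (x j) ^ 2) ≤ 1 ∧
    r = Real.sqrt (∑ i, (M.mulVec x i) ^ 2)}

/-- Dikin's constant `χ(Z)`: the maximum of `‖Z_I⁻¹‖₂` over all choices `I` of `n`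
columns of `Z` forming a nonsingular `n×n` submatrix `Z_I`. -/
noncomputable def chiConst {n : ℕ} {c : Type*} [Fintype c] [DecidableEq c]
    (Z : Matrix (Fin n) c ℝ) : ℝ :=
  sSup {r | ∃ e : Fin n → c, Function.Injective e ∧
    IsUnit (Z.submatrix id e).det ∧ r = specNorm (Z.submatrix id e)⁻¹}

/-- The matrix `Dₙ ∈ ℝ^{n×(n+1)}` whose `i`-th row is `e_{i+1} − e_i`, so that
`Dₙ λ ≤ 0` expresses `λ₁ ≥ … ≥ λ_{n+1}`. -/
def Dmat (n : ℕ) : Matrix (Fin n) (Fin (n + 1)) ℝ :=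
  fun i j => (if j = i.succ then 1 else 0) - (if j = i.castSucc then 1 else 0)

/-- The feasible set of the approximated model `SCO-Eig-ε`: matrices in `S_λ(A,b)` whose
consecutive eigenvalue gaps are at least `ε`. -/
def SEps {m n : ℕ} (A : Matrix (Fin m) (Fin (n + 1)) ℝ) (b : Fin m → ℝ) (ε : ℝ) :
    Set (Matrix (Fin (n + 1)) (Fin (n + 1)) ℝ) :=
  {X | X.IsHermitian ∧ (∀ i, A.mulVec (eigs X) i ≤ b i) ∧
    ∀ i : Fin n, eigs X i.succ ≤ eigs X i.castSucc - ε}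

/-!
Diagonalise `X* = U diag(λ(X*)) Uᵀ`. For fixed `U` the map `v ↦ U diag(v) Uᵀ` is an isometry from
eigenvalue space to the symmetric matrices and sends ordered vectors to matrices with exactly these
eigenvalues, so it suffices to find, close to `λ(X*)`, a vector of the polyhedron
`{y | Zᵀ y ≤ (b, -ε)}`, where `Z = [Aᵀ | Dₙᵀ]`. The vector `λ(X*)` violates only the `n - 1` gap
constraints, each by at most `ε`, and a Hoffman bound with constant `χ(Z)` moves it into the
polyhedron at cost `χ(Z) √(n - 1) ε`.

For the Hoffman bound, let `y` be the projection of `x` onto `{y | Zᵀ y ≤ q}`. By Farkas' lemma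
`x - y = Z μ` with `μ ≥ 0` supported on the constraints active at `y`, and by Carathéodory's theorem
for cones the columns of `Z` in the support of `μ` may be taken linearly independent; completing
them to a basis `Z_I` gives `‖μ‖ ≤ χ(Z) ‖x - y‖`. Complementary slackness then yields
`‖x - y‖² = ⟨μ, Zᵀ(x - y)⟩ ≤ ‖μ‖ ‖(Zᵀ x - q)⁺‖`.

Feasibility for small `ε` comes from spreading the eigenvalues of an interior point of `S_λ(A,b)`.
-/

section ConicHull

variable {ι E : Type*} {z : ι → E} {s : Set ι}

theorem mem_hull_image_iff_exists_finsupp {R : Type*} [Semiring R] [PartialOrder R]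
    [IsOrderedRing R] [AddCommMonoid E] [Module R E] {v : E} :
    v ∈ PointedCone.hull R (z '' s) ↔
      ∃ w : ι →₀ R, ↑w.support ⊆ s ∧ 0 ≤ w ∧ Finsupp.linearCombination R z w = v := by
  rw [Finsupp.mem_span_image_iff_linearCombination]
  constructor
  · rintro ⟨w, hws, rfl⟩
    exact ⟨⟨w.support, fun k ↦ w k, by simp [← Subtype.val_inj]⟩, hws, fun k ↦ (w k).2, rfl⟩
  · rintro ⟨w, hws, hw, rfl⟩
    exact ⟨⟨w.support, fun k ↦ ⟨w k, hw k⟩, by simp⟩, hws, rfl⟩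

theorem exists_pos_linear_relation_of_not_linearIndepOn {R : Type*} [Ring R] [LinearOrder R]
    [IsOrderedAddMonoid R] [AddCommGroup E] [Module R E] (h : ¬ LinearIndepOn R z s) :
    ∃ g : ι →₀ R, ↑g.support ⊆ s ∧ Finsupp.linearCombination R z g = 0 ∧ ∃ k, 0 < g k := by
  rw [linearIndepOn_iff] at h
  push Not at h
  obtain ⟨g, hgs, hg, hg0⟩ := h
  obtain ⟨k, hk⟩ := Finsupp.ne_iff.1 hg0
  rcases lt_or_gt_of_ne hk with hneg | hpos
  · exact ⟨-g, by rwa [Finsupp.support_neg], by rw [map_neg, hg, neg_zero], k, neg_pos.2 hneg⟩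
  · exact ⟨g, hgs, hg, k, hpos⟩

variable {𝕜 : Type*} [Field 𝕜] [LinearOrder 𝕜] [IsStrictOrderedRing 𝕜] [AddCommGroup E]
  [Module 𝕜 E]

theorem exists_support_ssubset_of_not_linearIndepOn {w : ι →₀ 𝕜} (hw : 0 ≤ w)
    (h : ¬ LinearIndepOn 𝕜 z w.support) :
    ∃ w' : ι →₀ 𝕜, w'.support ⊂ w.support ∧ 0 ≤ w' ∧
      Finsupp.linearCombination 𝕜 z w' = Finsupp.linearCombination 𝕜 z w := by
  obtain ⟨g, hgs, hg, k, hk⟩ := exists_pos_linear_relation_of_not_linearIndepOn h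
  obtain ⟨i, hi, hmin⟩ := Finset.exists_min_image {k ∈ g.support | 0 < g k}
    (fun k ↦ w k / g k) ⟨k, by simp [hk, hk.ne']⟩
  have hgi : 0 < g i := (Finset.mem_filter.1 hi).2
  have hws : (w - (w i / g i) • g).support ⊆ w.support := fun j hj ↦ by
    by_contra hjw
    have hgj : g j = 0 := Finsupp.notMem_support_iff.1 fun hjg ↦ hjw (hgs hjg)
    rw [Finsupp.notMem_support_iff] at hjw
    simp [hjw, hgj] at hj
  refine ⟨w - (w i / g i) • g, ?_, fun j ↦ ?_, by rw [map_sub, map_smul, hg, smul_zero, sub_zero]⟩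
  · refine (Finset.ssubset_iff_of_subset hws).2
      ⟨i, hgs (Finset.mem_filter.1 hi).1, by simp [hgi.ne']⟩
  · suffices w i / g i * g j ≤ w j by simpa using this
    rcases lt_or_ge 0 (g j) with hj | hj
    · exact (le_div_iff₀ hj).1 (hmin j (by simp [hj, hj.ne']))
    · exact (mul_nonpos_of_nonneg_of_nonpos (div_nonneg (hw i) hgi.le) hj).trans (hw j)

theorem exists_linearIndepOn_mem_hull_image {v : E}
    (hv : v ∈ PointedCone.hull 𝕜 (z '' s)) :
    ∃ t ⊆ s, LinearIndepOn 𝕜 z t ∧ v ∈ PointedCone.hull 𝕜 (z '' t) := by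
  obtain ⟨w, hws, hw, rfl⟩ := mem_hull_image_iff_exists_finsupp.1 hv
  clear hv
  induction h : w.support using Finset.strongInduction generalizing w with
  | H S ih =>
    subst h
    by_cases hli : LinearIndepOn 𝕜 z w.support
    · exact ⟨_, hws, hli, mem_hull_image_iff_exists_finsupp.2 ⟨w, subset_rfl, hw, rfl⟩⟩
    · obtain ⟨w', hss, hw', hsum⟩ := exists_support_ssubset_of_not_linearIndepOn hw hli
      rw [← hsum]
      exact ih _ hss w' ((Finset.coe_subset.2 hss.subset).trans hws) hw' rfl

end ConicHull

section ClosedCone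

variable {E : Type*} [AddCommGroup E] [Module ℝ E] [TopologicalSpace E] [IsTopologicalAddGroup E]
  [ContinuousSMul ℝ E] [T2Space E]

theorem isClosed_hull_range_of_linearIndependent {ι : Type*} [Finite ι] {z : ι → E}
    (h : LinearIndependent ℝ z) : IsClosed (PointedCone.hull ℝ (Set.range z) : Set E) := by
  have := Fintype.ofFinite ι
  have hull_eq_image : (PointedCone.hull ℝ (Set.range z) : Set E) =
      Fintype.linearCombination ℝ z '' Set.Ici 0 := by
    ext v
    rw [SetLike.mem_coe, Submodule.mem_span_range_iff_exists_fun]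
    constructor
    · rintro ⟨w, rfl⟩
      exact ⟨fun k ↦ w k, fun k ↦ (w k).2, rfl⟩
    · rintro ⟨w, hw, rfl⟩
      exact ⟨fun k ↦ ⟨w k, hw k⟩, rfl⟩
  have hker : LinearMap.ker (Fintype.linearCombination ℝ z) = ⊥ :=
    LinearMap.ker_eq_bot.2 (linearIndependent_iff_injective_fintypeLinearCombination.1 h)
  rw [hull_eq_image]
  exact (LinearMap.isClosedEmbedding_of_injective hker).isClosedMap _ isClosed_Ici

theorem isClosed_hull_of_finite {s : Set E} (hs : s.Finite) :
    IsClosed (PointedCone.hull ℝ s : Set E) := by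
  have hull_eq_iUnion : (PointedCone.hull ℝ s : Set E) =
      ⋃ t ∈ {t | t ⊆ s ∧ LinearIndepOn ℝ id t}, (PointedCone.hull ℝ t : Set E) := by
    refine Set.Subset.antisymm (fun v hv ↦ ?_)
      (Set.iUnion₂_subset fun t ht ↦ SetLike.coe_subset_coe.2 (Submodule.span_mono ht.1))
    rw [SetLike.mem_coe, ← Set.image_id s] at hv
    obtain ⟨t, hts, hli, hvt⟩ := exists_linearIndepOn_mem_hull_image hv
    exact Set.mem_biUnion ⟨hts, hli⟩ (Set.image_id t ▸ hvt)
  rw [hull_eq_iUnion]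
  refine (hs.finite_subsets.subset fun t ht ↦ ht.1).isClosed_biUnion fun t ht ↦ ?_
  have := (hs.subset ht.1).to_subtype
  simpa using isClosed_hull_range_of_linearIndependent ht.2

end ClosedCone

section Polyhedron

open scoped InnerProductSpace

variable {ι E : Type*} [NormedAddCommGroup E] [InnerProductSpace ℝ E]

theorem mem_hull_of_forall_inner_nonpos [CompleteSpace E] {s : Set E} (hs : s.Finite) {v : E}
    (h : ∀ d, (∀ u ∈ s, ⟪u, d⟫_ℝ ≤ 0) → ⟪v, d⟫_ℝ ≤ 0) : v ∈ PointedCone.hull ℝ s := by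
  let C : ProperCone ℝ E := ⟨PointedCone.hull ℝ s, isClosed_hull_of_finite hs⟩
  by_contra hv
  obtain ⟨y, hy, hvy⟩ := C.hyperplane_separation' hv
  have hneg : ⟪v, -y⟫_ℝ ≤ 0 := h (-y) fun u hu ↦ by
    simpa using hy u (PointedCone.subset_hull hu)
  rw [inner_neg_right] at hneg
  linarith

/-- The polyhedron `{y | ⟨zₖ, y⟩ ≤ qₖ for all k}`, given by its normals `z` and offsets `q`. -/
def polyhedron (z : ι → E) (q : ι → ℝ) : Set E := {y | ∀ k, ⟪z k, y⟫_ℝ ≤ q k}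

/-- The indices of the constraints of `polyhedron z q` that hold with equality at `y`. -/
def activeSet (z : ι → E) (q : ι → ℝ) (y : E) : Set ι := {k | ⟪z k, y⟫_ℝ = q k}

variable {z : ι → E} {q : ι → ℝ} {y : E}

theorem isClosed_polyhedron (z : ι → E) (q : ι → ℝ) : IsClosed (polyhedron z q) := by
  simp only [polyhedron, Set.ofPred_forall]
  exact isClosed_iInter fun k ↦ isClosed_le (by fun_prop) continuous_const

theorem convex_polyhedron (z : ι → E) (q : ι → ℝ) : Convex ℝ (polyhedron z q) := by
  simp only [polyhedron, Set.ofPred_forall]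
  exact convex_iInter fun k ↦ convex_halfSpace_le (innerₗ E (z k)).isLinear (q k)

open Filter Topology in
theorem eventually_add_smul_mem_polyhedron [Finite ι] {d : E} (hy : y ∈ polyhedron z q)
    (hd : ∀ k ∈ activeSet z q y, ⟪z k, d⟫_ℝ ≤ 0) :
    ∀ᶠ t : ℝ in 𝓝[>] 0, y + t • d ∈ polyhedron z q := by
  refine eventually_all.2 fun k ↦ ?_
  by_cases hk : k ∈ activeSet z q y
  · filter_upwards [self_mem_nhdsWithin] with t ht
    rw [inner_add_right, inner_smul_right, show ⟪z k, y⟫_ℝ = q k from hk]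
    exact add_le_of_nonpos_right (mul_nonpos_of_nonneg_of_nonpos (le_of_lt ht) (hd k hk))
  · have hcont : Continuous fun t : ℝ ↦ ⟪z k, y + t • d⟫_ℝ := by fun_prop
    have hlt : ⟪z k, y + (0 : ℝ) • d⟫_ℝ < q k := by simpa using lt_of_le_of_ne (hy k) hk
    exact nhdsWithin_le_nhds ((hcont.continuousAt.eventually_lt_const hlt).mono fun _ ↦ le_of_lt)

theorem mem_hull_activeSet_of_forall_inner_le_zero [CompleteSpace E] [Finite ι]
    (hy : y ∈ polyhedron z q) {u : E} (hu : ∀ p ∈ polyhedron z q, ⟪u, p - y⟫_ℝ ≤ 0) :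
    u ∈ PointedCone.hull ℝ (z '' activeSet z q y) := by
  refine mem_hull_of_forall_inner_nonpos (Set.toFinite _) fun d hd ↦ ?_
  obtain ⟨t, htmem, ht⟩ := ((eventually_add_smul_mem_polyhedron hy fun k hk ↦
    hd _ (Set.mem_image_of_mem z hk)).and self_mem_nhdsWithin).exists
  have htd := hu _ htmem
  rw [add_sub_cancel_left, inner_smul_right] at htd
  exact nonpos_of_mul_nonpos_right htd ht

theorem exists_mem_polyhedron_sub_mem_hull_activeSet [CompleteSpace E] [Finite ι]
    (hne : (polyhedron z q).Nonempty) (x : E) :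
    ∃ y ∈ polyhedron z q, x - y ∈ PointedCone.hull ℝ (z '' activeSet z q y) := by
  have hconv := convex_polyhedron z q
  obtain ⟨y, hy, hxy⟩ := exists_norm_eq_iInf_of_complete_convex hne
    (isClosed_polyhedron z q).isComplete hconv x
  exact ⟨y, hy, mem_hull_activeSet_of_forall_inner_le_zero hy
    ((norm_eq_iInf_iff_real_inner_le_zero hconv hy).1 hxy)⟩

end Polyhedron

section EuclideanNorm

variable {k l : Type*} [Fintype k] [Fintype l]

theorem sqrt_sum_sq_eq_norm_toLp (x : k → ℝ) : √(∑ i, x i ^ 2) = ‖WithLp.toLp 2 x‖ := by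
  simp [EuclideanSpace.norm_eq]

theorem norm_toLp_le_norm_toLp {x y : k → ℝ} (hx : 0 ≤ x) (hxy : x ≤ y) :
    ‖WithLp.toLp 2 x‖ ≤ ‖WithLp.toLp 2 y‖ := by
  simp only [← sqrt_sum_sq_eq_norm_toLp]
  gcongr with i
  · exact hx i
  · exact hxy i

open scoped Matrix.Norms.L2Operator in
theorem specNorm_eq_l2_opNorm [DecidableEq l] (M : Matrix k l ℝ) : specNorm M = ‖M‖ := by
  rw [l2_opNorm_def, ← ContinuousLinearMap.sSup_unitClosedBall_eq_norm, specNorm]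
  congr 1
  ext r
  simp only [sqrt_sum_sq_eq_norm_toLp]
  constructor
  · rintro ⟨x, hx, rfl⟩
    exact ⟨WithLp.toLp 2 x, by simpa using hx, rfl⟩
  · rintro ⟨x, hx, rfl⟩
    exact ⟨x.ofLp, by simpa using hx, rfl⟩

open scoped Matrix.Norms.L2Operator in
theorem norm_toLp_mulVec_le_specNorm_mul (M : Matrix k l ℝ) (x : l → ℝ) :
    ‖WithLp.toLp 2 (M *ᵥ x)‖ ≤ specNorm M * ‖WithLp.toLp 2 x‖ := by
  classical
  rw [specNorm_eq_l2_opNorm]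
  exact M.l2_opNorm_mulVec (WithLp.toLp 2 x)

open scoped Matrix.Norms.L2Operator in
theorem specNorm_nonneg (M : Matrix k l ℝ) : 0 ≤ specNorm M := by
  classical
  exact (specNorm_eq_l2_opNorm M).symm ▸ norm_nonneg M

end EuclideanNorm

section Hoffman

variable {N : ℕ} {c : Type*} [Fintype c]

theorem exists_projection_multiplier {n : Type*} [Fintype n] (Z : Matrix n c ℝ) {q : c → ℝ}
    (hne : ∃ y, Zᵀ *ᵥ y ≤ q) (x : n → ℝ) :
    ∃ y μ, Zᵀ *ᵥ y ≤ q ∧ 0 ≤ μ ∧ LinearIndepOn ℝ Z.col (Function.support μ) ∧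
      Z *ᵥ μ = x - y ∧ ∀ k, μ k ≠ 0 → (Zᵀ *ᵥ y) k = q k := by
  let z : c → EuclideanSpace ℝ n := fun k ↦ WithLp.toLp 2 (Z.col k)
  have inner_z : ∀ k (y : EuclideanSpace ℝ n), inner ℝ (z k) y = (Zᵀ *ᵥ y.ofLp) k := fun k y ↦ by
    simp [z, PiLp.inner_apply, mulVec, dotProduct, mul_comm]
  have hpoly : ∀ y, y ∈ polyhedron z q ↔ Zᵀ *ᵥ y.ofLp ≤ q := fun y ↦
    forall_congr' fun k ↦ by rw [inner_z]
  obtain ⟨y₀, hy₀⟩ := hne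
  obtain ⟨y, hy, hxy⟩ := exists_mem_polyhedron_sub_mem_hull_activeSet
    ⟨WithLp.toLp 2 y₀, (hpoly _).2 hy₀⟩ (WithLp.toLp 2 x)
  obtain ⟨t, ht, hli, hxyt⟩ := exists_linearIndepOn_mem_hull_image hxy
  obtain ⟨μ, hμt, hμ, hsum⟩ := mem_hull_image_iff_exists_finsupp.1 hxyt
  refine ⟨y.ofLp, μ, (hpoly y).1 hy, hμ, ?_, ?_, fun k hk ↦ ?_⟩
  · rw [Finsupp.fun_support_eq]
    exact (hli.mono hμt).map' (WithLp.linearEquiv 2 ℝ (n → ℝ)).toLinearMap (LinearEquiv.ker _)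
  · have := congrArg WithLp.ofLp hsum
    ext i
    simpa [z, Finsupp.linearCombination_apply, Finsupp.sum_fintype, mulVec, dotProduct, mul_comm]
      using congrFun this i
  · rw [← inner_z]
    exact ht (hμt (Finsupp.mem_support_iff.2 hk))

theorem exists_basis_columns_of_linearIndepOn {Z : Matrix (Fin N) c ℝ} (hrank : Z.rank = N)
    {J : Set c} (hJ : LinearIndepOn ℝ Z.col J) :
    ∃ e : Fin N → c, Function.Injective e ∧ IsUnit (Z.submatrix id e).det ∧ J ⊆ Set.range e := by
  classical
  obtain ⟨B, -, hJB, hspan, hB⟩ := exists_linearIndepOn_extension hJ (Set.subset_univ J)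
  have hspan_eq : Submodule.span ℝ (Set.range fun k : B ↦ Z.col k) =
      Submodule.span ℝ (Set.range Z.col) := by
    rw [← Set.image_eq_range, ← Set.image_univ]
    exact (Submodule.span_mono (Set.image_mono (Set.subset_univ B))).antisymm
      (Submodule.span_le.2 hspan)
  have hcard : Fintype.card B = N := by
    rw [← hrank, Matrix.rank_eq_finrank_span_cols, ← hspan_eq]
    exact (finrank_span_eq_card hB).symm
  let f : Fin N ≃ B := (Fintype.equivFinOfCardEq hcard).symm
  refine ⟨fun i ↦ f i, Subtype.val_injective.comp f.injective, ?_, fun k hk ↦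
    ⟨f.symm ⟨k, hJB hk⟩, by simp⟩⟩
  rw [← Matrix.isUnit_iff_isUnit_det, ← Matrix.linearIndependent_cols_iff_isUnit]
  exact (linearIndependent_equiv f).2 hB

variable [DecidableEq c]

theorem chiConst_nonneg (Z : Matrix (Fin N) c ℝ) : 0 ≤ chiConst Z := by
  refine Real.sSup_nonneg ?_
  rintro _ ⟨e, -, -, rfl⟩
  exact specNorm_nonneg _

theorem specNorm_inv_le_chiConst (Z : Matrix (Fin N) c ℝ) {e : Fin N → c}
    (he : Function.Injective e) (hdet : IsUnit (Z.submatrix id e).det) :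
    specNorm (Z.submatrix id e)⁻¹ ≤ chiConst Z := by
  refine le_csSup (Set.Finite.bddAbove ?_) ⟨e, he, hdet, rfl⟩
  refine (Set.finite_range fun e : Fin N → c ↦ specNorm (Z.submatrix id e)⁻¹).subset ?_
  rintro _ ⟨e, -, -, rfl⟩
  exact ⟨e, rfl⟩

theorem norm_toLp_le_chiConst_mul {Z : Matrix (Fin N) c ℝ} (hrank : Z.rank = N) {μ : c → ℝ}
    (hμ : LinearIndepOn ℝ Z.col (Function.support μ)) :
    ‖WithLp.toLp 2 μ‖ ≤ chiConst Z * ‖WithLp.toLp 2 (Z *ᵥ μ)‖ := by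
  obtain ⟨e, he, hdet, hsupp⟩ := exists_basis_columns_of_linearIndepOn hrank hμ
  have hzero : ∀ k ∉ Set.range e, μ k = 0 := fun k hk ↦ by
    simpa using mt (@hsupp k) hk
  have hmulVec : Z.submatrix id e *ᵥ (μ ∘ e) = Z *ᵥ μ := funext fun i ↦
    Fintype.sum_of_injective e he _ (fun k ↦ Z i k * μ k) (fun k hk ↦ by simp [hzero k hk])
      fun _ ↦ rfl
  have hinv : (Z.submatrix id e)⁻¹ *ᵥ (Z *ᵥ μ) = μ ∘ e := by
    rw [← hmulVec, mulVec_mulVec, nonsing_inv_mul _ hdet, one_mulVec]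
  have hnorm : ‖WithLp.toLp 2 (μ ∘ e)‖ = ‖WithLp.toLp 2 μ‖ := by
    simp only [← sqrt_sum_sq_eq_norm_toLp]
    congr 1
    exact Fintype.sum_of_injective e he _ (fun k ↦ μ k ^ 2) (fun k hk ↦ by simp [hzero k hk])
      fun _ ↦ rfl
  calc ‖WithLp.toLp 2 μ‖ = ‖WithLp.toLp 2 ((Z.submatrix id e)⁻¹ *ᵥ (Z *ᵥ μ))‖ := by
        rw [hinv, hnorm]
    _ ≤ specNorm (Z.submatrix id e)⁻¹ * ‖WithLp.toLp 2 (Z *ᵥ μ)‖ :=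
        norm_toLp_mulVec_le_specNorm_mul _ _
    _ ≤ chiConst Z * ‖WithLp.toLp 2 (Z *ᵥ μ)‖ := by
        gcongr
        exact specNorm_inv_le_chiConst Z he hdet

theorem exists_mulVec_le_norm_sub_le_chiConst_mul {Z : Matrix (Fin N) c ℝ} (hrank : Z.rank = N)
    {q : c → ℝ} (hne : ∃ y, Zᵀ *ᵥ y ≤ q) (x : Fin N → ℝ) :
    ∃ y, Zᵀ *ᵥ y ≤ q ∧
      ‖WithLp.toLp 2 (x - y)‖ ≤ chiConst Z * ‖WithLp.toLp 2 (Zᵀ *ᵥ x - q)⁺‖ := by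
  obtain ⟨y, μ, hy, hμ, hli, hsum, hactive⟩ := exists_projection_multiplier Z hne x
  refine ⟨y, hy, ?_⟩
  set R := ‖WithLp.toLp 2 (x - y)‖
  set r := (Zᵀ *ᵥ x - q)⁺
  have hcompl : ∀ k, μ k * (Zᵀ *ᵥ (x - y)) k ≤ μ k * r k := fun k ↦ by
    rcases eq_or_ne (μ k) 0 with hk | hk
    · simp [hk]
    · rw [mulVec_sub, Pi.sub_apply, hactive k hk]
      exact mul_le_mul_of_nonneg_left (le_posPart (Zᵀ *ᵥ x - q) k) (hμ k)
  have hsq : R * R ≤ chiConst Z * ‖WithLp.toLp 2 r‖ * R :=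
    calc R * R = (Z *ᵥ μ) ⬝ᵥ (x - y) := by
          rw [hsum, ← sq, EuclideanSpace.real_norm_sq_eq]
          simp [dotProduct, sq]
      _ = μ ⬝ᵥ (Zᵀ *ᵥ (x - y)) := by rw [← vecMul_transpose, ← dotProduct_mulVec]
      _ ≤ μ ⬝ᵥ r := Finset.sum_le_sum fun k _ ↦ hcompl k
      _ ≤ ‖WithLp.toLp 2 μ‖ * ‖WithLp.toLp 2 r‖ := by
          simpa [EuclideanSpace.inner_toLp_toLp, dotProduct_comm] using
            real_inner_le_norm (WithLp.toLp 2 μ) (WithLp.toLp 2 r)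
      _ ≤ chiConst Z * R * ‖WithLp.toLp 2 r‖ := by
          gcongr
          simpa only [hsum] using norm_toLp_le_chiConst_mul hrank hli
      _ = chiConst Z * ‖WithLp.toLp 2 r‖ * R := by ring
  rcases (show 0 ≤ R from norm_nonneg _).eq_or_lt with hR | hR
  · rw [← hR]
    exact mul_nonneg (chiConst_nonneg Z) (norm_nonneg _)
  · exact le_of_mul_le_mul_right hsq hR

end Hoffman

section Spectral

theorem eq_of_antitone_of_map_univ_eq {α : Type*} [PartialOrder α] {n : ℕ} {f g : Fin n → α}
    (hf : Antitone f) (hg : Antitone g)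
    (h : Finset.univ.val.map f = Finset.univ.val.map g) : f = g := by
  rw [Fin.univ_val_map, Fin.univ_val_map, Multiset.coe_eq_coe] at h
  exact List.ofFn_injective
    (h.eq_of_pairwise' hf.sortedGE_ofFn.pairwise hg.sortedGE_ofFn.pairwise)

theorem antitone_eigs {n : ℕ} (X : Matrix (Fin n) (Fin n) ℝ) : Antitone (eigs X) := by
  rw [eigs]
  split_ifs with hX
  · exact fun i j hij ↦ Tuple.monotone_sort hX.eigenvalues (Fin.rev_le_rev.2 hij)
  · exact antitone_const

theorem exists_perm_eigs_eq_eigenvalues_comp {n : ℕ} {X : Matrix (Fin n) (Fin n) ℝ}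
    (hX : X.IsHermitian) : ∃ σ : Equiv.Perm (Fin n), eigs X = hX.eigenvalues ∘ σ := by
  refine ⟨Fin.revPerm.trans (Tuple.sort hX.eigenvalues), ?_⟩
  rw [eigs, dif_pos hX]
  rfl

theorem map_eigs_univ_eq_roots_charpoly {n : ℕ} {X : Matrix (Fin n) (Fin n) ℝ}
    (hX : X.IsHermitian) : Finset.univ.val.map (eigs X) = X.charpoly.roots := by
  obtain ⟨σ, hσ⟩ := exists_perm_eigs_eq_eigenvalues_comp hX
  rw [hσ, ← Multiset.map_map, Multiset.map_univ_val_equiv, hX.roots_charpoly_eq_eigenvalues]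
  rfl

theorem sum_sum_sq_eq_trace {k l : Type*} [Fintype k] [Fintype l] (M : Matrix k l ℝ) :
    ∑ i, ∑ j, M i j ^ 2 = (Mᵀ * M).trace := by
  simp only [Matrix.trace, Matrix.diag, Matrix.mul_apply, Matrix.transpose_apply, sq]
  exact Finset.sum_comm

variable {ι : Type*} [Fintype ι] [DecidableEq ι]

/-- The symmetric matrix `U diag(v) Uᵀ` with eigenvalues `v` along the columns of the orthogonal
matrix `U`. For fixed `U` it embeds eigenvalue space isometrically into the symmetric matrices. -/
def spectralMatrix (U : orthogonalGroup ι ℝ) (v : ι → ℝ) : Matrix ι ι ℝ :=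
  U * diagonal v * (U : Matrix ι ι ℝ)ᵀ

theorem isHermitian_spectralMatrix (U : orthogonalGroup ι ℝ) (v : ι → ℝ) :
    (spectralMatrix U v).IsHermitian :=
  isHermitian_mul_mul_conjTranspose (U : Matrix ι ι ℝ) (isHermitian_diagonal v)

theorem continuous_spectralMatrix (U : orthogonalGroup ι ℝ) : Continuous (spectralMatrix U) := by
  unfold spectralMatrix
  fun_prop

theorem spectralMatrix_sub (U : orthogonalGroup ι ℝ) (v w : ι → ℝ) :
    spectralMatrix U (v - w) = spectralMatrix U v - spectralMatrix U w := by
  rw [spectralMatrix, spectralMatrix, spectralMatrix, ← Matrix.sub_mul, ← Matrix.mul_sub,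
    diagonal_sub]
  rfl

theorem frobNorm_spectralMatrix (U : orthogonalGroup ι ℝ) (v : ι → ℝ) :
    frobNorm (spectralMatrix U v) = ‖WithLp.toLp 2 v‖ := by
  have hU := (mem_orthogonalGroup_iff' ι ℝ).1 U.2
  have htrace : ((spectralMatrix U v)ᵀ * spectralMatrix U v).trace = ∑ i, v i ^ 2 :=
    calc ((spectralMatrix U v)ᵀ * spectralMatrix U v).trace
        = (U * (diagonal v * ((U : Matrix ι ι ℝ)ᵀ * U) * diagonal v) *
            (U : Matrix ι ι ℝ)ᵀ).trace := by
          simp only [spectralMatrix, transpose_mul, transpose_transpose, diagonal_transpose,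
            Matrix.mul_assoc]
      _ = (diagonal v * diagonal v).trace := by
          rw [trace_mul_comm, ← Matrix.mul_assoc, hU, Matrix.one_mul, Matrix.mul_one]
      _ = ∑ i, v i ^ 2 := by simp only [diagonal_mul_diagonal, trace_diagonal, sq]
  rw [frobNorm, sum_sum_sq_eq_trace, htrace, sqrt_sum_sq_eq_norm_toLp]

theorem roots_charpoly_spectralMatrix (U : orthogonalGroup ι ℝ) (v : ι → ℝ) :
    (spectralMatrix U v).charpoly.roots = Finset.univ.val.map v := by
  rw [spectralMatrix, charpoly_mul_comm, ← Matrix.mul_assoc,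
    (mem_orthogonalGroup_iff' ι ℝ).1 U.2, Matrix.one_mul, charpoly_diagonal,
    Polynomial.roots_prod _ _ (by simp [Finset.prod_ne_zero_iff, Polynomial.X_sub_C_ne_zero])]
  simp only [Polynomial.roots_X_sub_C, Multiset.bind_singleton]

theorem eigs_spectralMatrix {n : ℕ} (U : orthogonalGroup (Fin n) ℝ) {v : Fin n → ℝ}
    (hv : Antitone v) : eigs (spectralMatrix U v) = v :=
  eq_of_antitone_of_map_univ_eq (antitone_eigs _) hv <| by
    rw [map_eigs_univ_eq_roots_charpoly (isHermitian_spectralMatrix U v),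
      roots_charpoly_spectralMatrix]

theorem exists_spectralMatrix_comp_perm_eq (U : orthogonalGroup ι ℝ) (σ : Equiv.Perm ι) :
    ∃ U' : orthogonalGroup ι ℝ, ∀ v, spectralMatrix U' (v ∘ σ) = spectralMatrix U v := by
  have hU' : (U : Matrix ι ι ℝ).submatrix id σ ∈ orthogonalGroup ι ℝ := by
    rw [mem_orthogonalGroup_iff', transpose_submatrix,
      ← submatrix_mul _ _ _ _ _ Function.bijective_id, (mem_orthogonalGroup_iff' ι ℝ).1 U.2,
      submatrix_one_equiv]
  refine ⟨⟨_, hU'⟩, fun v ↦ ?_⟩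
  rw [spectralMatrix, spectralMatrix, ← submatrix_diagonal_equiv, transpose_submatrix,
    submatrix_mul_equiv, submatrix_mul_equiv, submatrix_id_id]

theorem exists_eq_spectralMatrix_eigs {n : ℕ} {X : Matrix (Fin n) (Fin n) ℝ}
    (hX : X.IsHermitian) : ∃ U, X = spectralMatrix U (eigs X) := by
  obtain ⟨σ, hσ⟩ := exists_perm_eigs_eq_eigenvalues_comp hX
  obtain ⟨U, hU⟩ := exists_spectralMatrix_comp_perm_eq hX.eigenvectorUnitary σ
  refine ⟨U, ?_⟩
  rw [hσ, hU]
  exact hX.spectral_theorem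

end Spectral

section GapSets

variable {m n : ℕ} {A : Matrix (Fin m) (Fin (n + 1)) ℝ} {b : Fin m → ℝ} {ε : ℝ}

theorem Dmat_mulVec_apply (v : Fin (n + 1) → ℝ) (i : Fin n) :
    (Dmat n *ᵥ v) i = v i.succ - v i.castSucc := by
  simp [Dmat, mulVec, dotProduct, sub_mul, Finset.sum_sub_distrib]

theorem transpose_fromCols_mulVec_le_iff {v : Fin (n + 1) → ℝ} :
    (fromCols Aᵀ (Dmat n)ᵀ)ᵀ *ᵥ v ≤ Sum.elim b (fun _ ↦ -ε) ↔
      (∀ i, (A *ᵥ v) i ≤ b i) ∧ ∀ i : Fin n, v i.succ ≤ v i.castSucc - ε := by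
  rw [transpose_fromCols, transpose_transpose, transpose_transpose, fromRows_mulVec,
    Sum.elim_le_elim_iff]
  simp only [Pi.le_def, Dmat_mulVec_apply, sub_le_iff_le_add', ← sub_eq_add_neg]

theorem mem_SEps_iff {X : Matrix (Fin (n + 1)) (Fin (n + 1)) ℝ} :
    X ∈ SEps A b ε ↔ X.IsHermitian ∧
      (fromCols Aᵀ (Dmat n)ᵀ)ᵀ *ᵥ eigs X ≤ Sum.elim b fun _ ↦ -ε := by
  rw [transpose_fromCols_mulVec_le_iff]
  rfl

theorem SEps_zero : SEps A b 0 = SLambda A b := by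
  ext X
  refine ⟨fun hX ↦ ⟨hX.1, hX.2.1⟩, fun hX ↦ ⟨hX.1, hX.2, fun i ↦ ?_⟩⟩
  simpa using antitone_eigs X i.castSucc_lt_succ.le

theorem antitone_SEps : Antitone (SEps A b) := fun _ _ hε _ hX ↦
  ⟨hX.1, hX.2.1, fun i ↦ (hX.2.2 i).trans (sub_le_sub_left hε _)⟩

theorem spectralMatrix_mem_SEps (hε : 0 ≤ ε) (U : orthogonalGroup (Fin (n + 1)) ℝ)
    {v : Fin (n + 1) → ℝ}
    (hv : (fromCols Aᵀ (Dmat n)ᵀ)ᵀ *ᵥ v ≤ Sum.elim b fun _ ↦ -ε) :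
    spectralMatrix U v ∈ SEps A b ε := by
  have hanti : Antitone v := Fin.antitone_iff_succ_le.2 fun i ↦
    ((transpose_fromCols_mulVec_le_iff.1 hv).2 i).trans (sub_le_self _ hε)
  rw [mem_SEps_iff, eigs_spectralMatrix U hanti]
  exact ⟨isHermitian_spectralMatrix U v, hv⟩

theorem norm_toLp_gap_residual_le (hε : 0 ≤ ε) {X : Matrix (Fin (n + 1)) (Fin (n + 1)) ℝ}
    (hX : X ∈ SLambda A b) :
    ‖WithLp.toLp 2 ((fromCols Aᵀ (Dmat n)ᵀ)ᵀ *ᵥ eigs X - Sum.elim b fun _ ↦ -ε)⁺‖ ≤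
      √n * ε := by
  have hle : (fromCols Aᵀ (Dmat n)ᵀ)ᵀ *ᵥ eigs X ≤ Sum.elim b fun _ ↦ -0 :=
    (mem_SEps_iff.1 (SEps_zero.symm ▸ hX)).2
  have hres : ((fromCols Aᵀ (Dmat n)ᵀ)ᵀ *ᵥ eigs X - Sum.elim b fun _ ↦ -ε)⁺ ≤
      Sum.elim (0 : Fin m → ℝ) fun _ ↦ ε := by
    refine sup_le (fun k ↦ ?_) (fun k ↦ ?_)
    · have hk := hle k
      rcases k with _ | _ <;> simpa using hk
    · rcases k with _ | _ <;> simp [hε]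
  calc ‖WithLp.toLp 2 ((fromCols Aᵀ (Dmat n)ᵀ)ᵀ *ᵥ eigs X - Sum.elim b fun _ ↦ -ε)⁺‖
      ≤ ‖WithLp.toLp 2 (Sum.elim (0 : Fin m → ℝ) fun _ : Fin n ↦ ε)‖ :=
        norm_toLp_le_norm_toLp (posPart_nonneg _) hres
    _ = √n * ε := by
        rw [← sqrt_sum_sq_eq_norm_toLp]
        simp [Real.sqrt_sq hε]

theorem exists_mem_SEps_frobNorm_sub_le (hrank : (fromCols Aᵀ (Dmat n)ᵀ).rank = n + 1)
    (hε : 0 ≤ ε) (hne : (SEps A b ε).Nonempty) {X : Matrix (Fin (n + 1)) (Fin (n + 1)) ℝ}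
    (hX : X ∈ SLambda A b) :
    ∃ Y ∈ SEps A b ε, frobNorm (X - Y) ≤ chiConst (fromCols Aᵀ (Dmat n)ᵀ) * (√n * ε) := by
  obtain ⟨W, hW⟩ := hne
  obtain ⟨U, hU⟩ := exists_eq_spectralMatrix_eigs hX.1
  obtain ⟨y, hy, hdist⟩ :=
    exists_mulVec_le_norm_sub_le_chiConst_mul hrank ⟨_, (mem_SEps_iff.1 hW).2⟩ (eigs X)
  refine ⟨spectralMatrix U y, spectralMatrix_mem_SEps hε U hy, ?_⟩
  calc frobNorm (X - spectralMatrix U y) = ‖WithLp.toLp 2 (eigs X - y)‖ := by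
        rw [← frobNorm_spectralMatrix U, spectralMatrix_sub, ← hU]
    _ ≤ chiConst (fromCols Aᵀ (Dmat n)ᵀ) * _ := hdist
    _ ≤ chiConst (fromCols Aᵀ (Dmat n)ᵀ) * (√n * ε) :=
        mul_le_mul_of_nonneg_left (norm_toLp_gap_residual_le hε hX) (chiConst_nonneg _)

theorem spectralMatrix_eigs_sub_mem_SEps {X : Matrix (Fin (n + 1)) (Fin (n + 1)) ℝ}
    (U : orthogonalGroup (Fin (n + 1)) ℝ) (hε : 0 ≤ ε)
    (hmem : spectralMatrix U (fun i ↦ eigs X i - ε * (i : ℕ)) ∈ SLambda A b) :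
    spectralMatrix U (fun i ↦ eigs X i - ε * (i : ℕ)) ∈ SEps A b ε := by
  set v : Fin (n + 1) → ℝ := fun i ↦ eigs X i - ε * (i : ℕ) with hv
  have hgap : ∀ i : Fin n, v i.succ ≤ v i.castSucc - ε := fun i ↦ by
    have := antitone_eigs X i.castSucc_lt_succ.le
    simp only [hv, Fin.val_succ, Fin.val_castSucc, Nat.cast_add, Nat.cast_one]
    linarith
  have hanti : Antitone v :=
    Fin.antitone_iff_succ_le.2 fun i ↦ (hgap i).trans (sub_le_self _ hε)
  refine ⟨hmem.1, hmem.2, ?_⟩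
  rwa [eigs_spectralMatrix U hanti]

theorem exists_pos_SEps_nonempty
    (hint : (interior {Y : {X : Matrix (Fin (n + 1)) (Fin (n + 1)) ℝ // X.IsHermitian} |
      (Y : Matrix (Fin (n + 1)) (Fin (n + 1)) ℝ) ∈ SLambda A b}).Nonempty) :
    ∃ ε > 0, (SEps A b ε).Nonempty := by
  obtain ⟨⟨X, hX⟩, hXint⟩ := hint
  obtain ⟨U, hU⟩ := exists_eq_spectralMatrix_eigs hX
  let γ : ℝ → {X : Matrix (Fin (n + 1)) (Fin (n + 1)) ℝ // X.IsHermitian} := fun t ↦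
    ⟨spectralMatrix U fun i ↦ eigs X i - t * (i : ℕ), isHermitian_spectralMatrix U _⟩
  have hγ : Continuous γ :=
    ((continuous_spectralMatrix U).comp (by fun_prop)).subtype_mk _
  have hγ_zero : γ 0 = ⟨X, hX⟩ := Subtype.ext <| by simp [γ, ← hU]
  have hmem : ∀ᶠ t in nhds 0, (γ t : Matrix (Fin (n + 1)) (Fin (n + 1)) ℝ) ∈ SLambda A b :=
    hγ.continuousAt.eventually_mem (hγ_zero ▸ mem_interior_iff_mem_nhds.1 hXint)
  obtain ⟨t, ht_pos, ht⟩ := hmem.exists_gt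
  exact ⟨t, ht_pos, _, spectralMatrix_eigs_sub_mem_SEps U ht_pos.le ht⟩

end GapSets

/-- Accuracy of the approximated model: if `F` is `L`-Lipschitz (Frobenius norm),
`S_λ(A,b)` has nonempty interior (in the space of symmetric matrices), and
`[Aᵀ | Dₙᵀ]` has full rank, then there is `ε₀ > 0` such that for all `ε ∈ [0,ε₀]`
the feasible set of `SCO-Eig-ε` is nonempty, and any of its global minimizers `X*_ε`
satisfies `|F(X*) − F(X*_ε)| ≤ L · χ([Aᵀ|Dₙᵀ]) · √(n−1) · ε`, where `X*` is a global
minimizer of the original problem. (Here the matrices are `(n+1)×(n+1)`, so the paper's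
`n−1` is `n`.) -/
theorem statement5 {m n : ℕ} (A : Matrix (Fin m) (Fin (n + 1)) ℝ) (b : Fin m → ℝ)
    (F : Matrix (Fin (n + 1)) (Fin (n + 1)) ℝ → ℝ) (L : ℝ) (hL : 0 < L)
    (hLip : ∀ X Y : Matrix (Fin (n + 1)) (Fin (n + 1)) ℝ,
      X.IsHermitian → Y.IsHermitian → |F X - F Y| ≤ L * frobNorm (X - Y))
    (hint : (interior {Y : {X : Matrix (Fin (n + 1)) (Fin (n + 1)) ℝ // X.IsHermitian} |
      (Y : Matrix (Fin (n + 1)) (Fin (n + 1)) ℝ) ∈ SLambda A b}).Nonempty)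
    (hrank : (fromCols Aᵀ (Dmat n)ᵀ).rank = n + 1)
    (Xstar : Matrix (Fin (n + 1)) (Fin (n + 1)) ℝ)
    (hXstar : Xstar ∈ SLambda A b)
    (hmin : ∀ X ∈ SLambda A b, F Xstar ≤ F X) :
    ∃ ε₀ > (0 : ℝ), ∀ ε ∈ Set.Icc (0 : ℝ) ε₀,
      (SEps A b ε).Nonempty ∧
      ∀ Xe ∈ SEps A b ε, (∀ X ∈ SEps A b ε, F Xe ≤ F X) →
        |F Xstar - F Xe| ≤ L * chiConst (fromCols Aᵀ (Dmat n)ᵀ) * Real.sqrt n * ε := by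
  obtain ⟨ε₀, hε₀, hne⟩ := exists_pos_SEps_nonempty hint
  refine ⟨ε₀, hε₀, fun ε hε ↦ ⟨hne.mono (antitone_SEps hε.2), fun Xe hXe hXe_min ↦ ?_⟩⟩
  obtain ⟨Y, hY, hdist⟩ := exists_mem_SEps_frobNorm_sub_le hrank hε.1 ⟨Xe, hXe⟩ hXstar
  have hle : F Xstar ≤ F Xe := hmin Xe ⟨hXe.1, hXe.2.1⟩
  calc |F Xstar - F Xe| = F Xe - F Xstar := by rw [abs_sub_comm, abs_of_nonneg (sub_nonneg.2 hle)]
    _ ≤ F Y - F Xstar := sub_le_sub_right (hXe_min Y hY) _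
    _ ≤ |F Xstar - F Y| := by rw [abs_sub_comm]; exact le_abs_self _
    _ ≤ L * frobNorm (Xstar - Y) := hLip Xstar Y hXstar.1 hY.1
    _ ≤ L * (chiConst (fromCols Aᵀ (Dmat n)ᵀ) * (√n * ε)) := by gcongr
    _ = L * chiConst (fromCols Aᵀ (Dmat n)ᵀ) * √n * ε := by ring
end
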